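/- Let F_13 be the prime field with 13 elements, in which 2 is a primitive element. A triple (H_2, H_1, H_0) of row vectors in F_13^{1×2} defines a (2,1,2) complete MDP convolutional code (i.e. h_1 and h_2 are coprime in F_13[z] and the complete 4-MDP minor condition holds) if and only if there exist β, γ ∈ F_13 \ {0}, i_1 ∈ {0,…,11} and j ∈ {0, 1} such that H_2 = [β, γ], H_1 = [β · 2^{i_1}, γ · 2^{i_2}], H_0 = [β · 2^{i_3}, γ · 2^{i_3}], where i_2 ≡ i_1 + 6 (mod 12) and i_3 ≡ 2i_1 + 1 + 6j (mod 12). Consequently, there are exactly 12² · 24 = 3456 such triples with all six entries nonzero. -/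

import Mathlib

/-!
Replacing `h_1(z), h_2(z)` by `u t² h_1(z / t), v t² h_2(z / t)` with `u, v, t ≠ 0` multiplies the
rows and columns of `𝔥_4` by nonzero scalars, so it does not affect which minors vanish
(`allMinors_scale`). Triangular minors force `h12, h22, h11 ≠ 0` (`leading_ne_zero`), so every
complete MDP code can be brought to the form `h12 = h22 = h11 = 1`. Of the `13³` remaining triples
`(h10, h20, h21)`, a finite search modulo `13` leaves only `(2, 2, -1)` and `(-2, -2, -1)`
(`normalised_of_allMinors`), and these two pass all admissible minors (`allMinors_normalised`).
The search evaluates minors by Laplace expansion on natural number representatives (`laplace`).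

Undoing the normalisation with `t = 2^{i₁}`, `-1 = 2^6` and `±2 = 2^{1 + 6j}` gives the stated
family, and coprimality of its members is an explicit Bézout identity (`isCoprime_family`). The
count follows because the parametrisation by `(β, γ, i₁, j)` is injective (`family_injOn`).
-/

open Polynomial

/-- The partial parity-check matrix `𝔥_j` built from coefficient matrices
`H_0, …, H_ν ∈ R^{(n-k)×n}`: the block in block-row `r ∈ {0,…,j}` and block-column
`c ∈ {0,…,ν+j}` is `H_{ν+r-c}` if `r ≤ c ≤ ν + r` and the zero matrix otherwise. -/
def pcm {R : Type*} [CommRing R] (n k ν : ℕ) (hn : 0 < n) (hnk : k < n)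
    (H : Fin (ν + 1) → Matrix (Fin (n - k)) (Fin n) R) (j : ℕ) :
    Matrix (Fin ((j + 1) * (n - k))) (Fin ((ν + j + 1) * n)) R :=
  fun p q =>
    if h : (p : ℕ) / (n - k) ≤ (q : ℕ) / n ∧ (q : ℕ) / n ≤ ν + (p : ℕ) / (n - k) then
      H ⟨ν + (p : ℕ) / (n - k) - (q : ℕ) / n, by omega⟩
        ⟨(p : ℕ) % (n - k), Nat.mod_lt _ (by omega)⟩
        ⟨(q : ℕ) % n, Nat.mod_lt _ hn⟩
    else 0

/-- A (0-based) strictly increasing choice `js` of `(j+1)(n-k)` columns of `𝔥_j` is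
admissible if (with 1-based indices) `j_{(n-k)s+1} > sn` and `j_{(n-k)s} ≤ sn + νn`
for all `s = 1, …, j`. -/
def Admissible (n k ν j : ℕ) (js : Fin ((j + 1) * (n - k)) → Fin ((ν + j + 1) * n)) : Prop :=
  StrictMono js ∧
  ∀ s : ℕ, 1 ≤ s → s ≤ j →
    ∀ (h1 : (n - k) * s < (j + 1) * (n - k)) (h2 : (n - k) * s - 1 < (j + 1) * (n - k)),
      s * n ≤ (js ⟨(n - k) * s, h1⟩ : ℕ) ∧
      (js ⟨(n - k) * s - 1, h2⟩ : ℕ) < s * n + ν * n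

/-- The complete `j`-MDP minor condition: every full size minor of `𝔥_j` formed by an
admissible choice of columns is nonzero. -/
def CompleteJMDP {F : Type*} [Field F] (n k ν : ℕ) (hn : 0 < n) (hnk : k < n)
    (H : Fin (ν + 1) → Matrix (Fin (n - k)) (Fin n) F) (j : ℕ) : Prop :=
  ∀ js : Fin ((j + 1) * (n - k)) → Fin ((ν + j + 1) * n), Admissible n k ν j js →
    ((pcm n k ν hn hnk H j).submatrix id js).det ≠ 0

/-- `hpoly c0 c1 c2 = c0 + c1·z + c2·z²`. -/
noncomputable def hpoly {F : Type*} [Field F] (c0 c1 c2 : F) : Polynomial F :=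
  C c0 + C c1 * X + C c2 * X ^ 2

/-- The triple `(H_0, H_1, H_2)` of `1 × 2` coefficient matrices `H_i = [h_{1,i}, h_{2,i}]`
(parameters `n = 2`, `k = 1`, `ν = 2`). -/
def Htriple {F : Type*} [Field F] (h10 h11 h12 h20 h21 h22 : F) :
    Fin (2 + 1) → Matrix (Fin (2 - 1)) (Fin 2) F :=
  ![Matrix.of fun _ c => ![h10, h20] c,
    Matrix.of fun _ c => ![h11, h21] c,
    Matrix.of fun _ c => ![h12, h22] c]

/-- `(H_2, H_1, H_0)` defines a `(2,1,2)` complete `j`-MDP convolutional code: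
`h_1(z) = h_{1,0} + h_{1,1}z + h_{1,2}z²` and `h_2(z) = h_{2,0} + h_{2,1}z + h_{2,2}z²`
are coprime in `F[z]` (equivalently, `H(z) = [h_1(z) h_2(z)]` is left prime) and the
complete `j`-MDP minor condition holds. -/
def Is212 {F : Type*} [Field F] (j : ℕ) (h10 h11 h12 h20 h21 h22 : F) : Prop :=
  IsCoprime (hpoly h10 h11 h12) (hpoly h20 h21 h22) ∧
  CompleteJMDP 2 1 2 (by norm_num) (by norm_num) (Htriple h10 h11 h12 h20 h21 h22) j

/-- Over the prime field `F_13` (in which `2` is a primitive element), a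
triple `(H_2, H_1, H_0)` defines a `(2,1,2)` complete MDP (= complete `4`-MDP)
convolutional code if and only if `H_2 = [β, γ]`, `H_1 = [β·2^{i_1}, γ·2^{i_2}]`,
`H_0 = [β·2^{i_3}, γ·2^{i_3}]` with `β, γ ≠ 0`, `i_1 ∈ {0,…,11}`, `j ∈ {0,1}`,
`i_2 ≡ i_1 + 6 (mod 12)` and `i_3 ≡ 2i_1 + 1 + 6j (mod 12)`. Consequently there are
exactly `12² · 24 = 3456` such triples (with all six entries nonzero). -/
instance : Fact (Nat.Prime 13) := ⟨by norm_num⟩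

/-! ### Minors as Laplace expansions -/

section Minors

variable {R : Type*} [CommRing R]

/-- The entry of `𝔥_4` in row `p` and column `q` (both 0-based) for `(n, k, ν) = (2, 1, 2)`:
row `p` is `h12, h22, h11, h21, h10, h20` starting at column `2p`, and zero elsewhere. -/
def ent {R : Type*} [Zero R] (h10 h11 h12 h20 h21 h22 : R) (p q : ℕ) : R :=
  match q + 1 - 2 * p with
  | 1 => h12
  | 2 => h22
  | 3 => h11
  | 4 => h21
  | 5 => h10
  | 6 => h20
  | _ => 0

/-- The minor of the infinite matrix `M` on rows `r, …, r + n - 1` and columns `c 0, …, c (n-1)`. -/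
def minorAt {n : ℕ} (M : ℕ → ℕ → R) (r : ℕ) (c : Fin n → ℕ) : R :=
  (Matrix.of fun i j : Fin n => M (r + i) (c j)).det

/-- The alternating sum `∑ i, (-1)^i f(l_i, l without l_i)` modulo `13`, with `12` standing
for `-1` so that it evaluates in `ℕ`. The recursor is used directly because the kernel unfolds it
faster than compiled structural recursion. -/
noncomputable def altSum (l : List ℕ) : (ℕ → List ℕ → ℕ) → ℕ :=
  List.rec (fun _ => 0) (fun a l ih f => f a l + 12 * ih (fun b rest => f b (a :: rest))) l

/-- Minor modulo `13` of `M` on `n` consecutive rows starting at `r` and the listed columns, by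
Laplace expansion along the top row; the inner `Nat.rec` is the case distinction that skips zero
entries. -/
noncomputable def laplace (M : ℕ → ℕ → ℕ) (n : ℕ) : ℕ → List ℕ → ℕ :=
  Nat.rec (fun _ _ => 1)
    (fun _ ih r l =>
      altSum l fun a rest => Nat.rec 0 (fun k _ => (k + 1) * ih (r + 1) rest) (M r a)) n

theorem altSum_cons (f : ℕ → List ℕ → ℕ) (a : ℕ) (l : List ℕ) :
    altSum (a :: l) f = f a l + 12 * altSum l (fun b rest => f b (a :: rest)) := rfl

theorem laplace_succ (M : ℕ → ℕ → ℕ) (n r : ℕ) (l : List ℕ) :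
    laplace M (n + 1) r l = altSum l fun a rest => M r a * laplace M n (r + 1) rest := by
  change altSum l (fun a rest => Nat.rec 0 (fun k _ => (k + 1) * laplace M n (r + 1) rest) (M r a)) = _
  congr 1
  funext a rest
  cases M r a <;> simp

theorem altSum_ofFn {n : ℕ} (f : ℕ → List ℕ → ℕ) (c : Fin (n + 1) → ℕ) :
    (altSum (List.ofFn c) f : ZMod 13) =
      ∑ i : Fin (n + 1), (-1) ^ (i : ℕ) * (f (c i) (List.ofFn fun j => c (i.succAbove j)) : ZMod 13)
    := by
  have h12 : (12 : ZMod 13) = -1 := by decide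
  induction n generalizing f with
  | zero => simp [altSum]
  | succ n ih =>
    rw [List.ofFn_succ, altSum_cons, Nat.cast_add, Nat.cast_mul, ih, Fin.sum_univ_succ (n := n + 1),
      Nat.cast_ofNat, h12, Finset.mul_sum]
    congr 1
    · simp
    · refine Finset.sum_congr rfl fun i _ => ?_
      rw [List.ofFn_succ (f := fun j => c (i.succ.succAbove j))]
      simp [pow_succ]

theorem laplace_ofFn (M : ℕ → ℕ → ℕ) {n : ℕ} (r : ℕ) (c : Fin n → ℕ) :
    (laplace M n r (List.ofFn c) : ZMod 13) = minorAt (fun p q => (M p q : ZMod 13)) r c := by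
  induction n generalizing r with
  | zero => simp [laplace, minorAt]
  | succ n ih =>
    rw [laplace_succ, altSum_ofFn, minorAt, Matrix.det_succ_row_zero]
    refine Finset.sum_congr rfl fun i _ => ?_
    have hsub : (Matrix.of fun i j : Fin (n + 1) => (M (r + i) (c j) : ZMod 13)).submatrix
          Fin.succ i.succAbove
        = Matrix.of fun i' j : Fin n => (M (r + 1 + i') (c (i.succAbove j)) : ZMod 13) := by
      ext i' j
      simp [add_assoc, add_comm 1]
    rw [hsub]
    have := ih (r + 1) (fun j => c (i.succAbove j))
    rw [minorAt] at this
    rw [← this]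
    simp [mul_assoc]

/-- Rescaling `h_c(z) ↦ u_c t² h_c(z / t)` multiplies rows and columns of `𝔥_4` by powers of `t`
and the constants `u_c`. -/
theorem ent_scale (u v t h10 h11 h12 h20 h21 h22 : R) (p q : ℕ) :
    t ^ p * ent (u * t ^ 2 * h10) (u * t * h11) (u * h12) (v * t ^ 2 * h20) (v * t * h21) (v * h22)
        p q
      = (if q % 2 = 0 then u else v) * t ^ (q / 2) * ent h10 h11 h12 h20 h21 h22 p q := by
  by_cases hlt : q < 2 * p
  · have h0 : q + 1 - 2 * p = 0 := by omega
    simp [ent, h0]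
  obtain ⟨k, rfl⟩ := Nat.exists_eq_add_of_le (not_lt.1 hlt)
  have h1 : 2 * p + k + 1 - 2 * p = k + 1 := by omega
  have h2 : (2 * p + k) / 2 = p + k / 2 := by omega
  have h3 : (2 * p + k) % 2 = k % 2 := by omega
  rw [h2, h3]
  rcases k with _ | _ | _ | _ | _ | _ | k <;> simp [ent, h1] <;> ring

end Minors

/-! ### The matrix `𝔥_4` and rescaling -/

/-- The minor of `𝔥_4` on the columns `c`. -/
def minor5 {R : Type*} [CommRing R] (h10 h11 h12 h20 h21 h22 : R) (c : Fin 5 → ℕ) : R :=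
  minorAt (ent h10 h11 h12 h20 h21 h22) 0 c

/-- Admissibility for `(n, k, ν, j) = (2, 1, 2, 4)`, with 0-based column indices. -/
def Adm (c : Fin 5 → ℕ) : Prop :=
  StrictMono c ∧ ∀ s : Fin 5, 2 * (s : ℕ) ≤ c s ∧ c s < 2 * s + 6

/-- All admissible minors of `𝔥_4` are nonzero. -/
def AllMinors {F : Type*} [Field F] (h10 h11 h12 h20 h21 h22 : F) : Prop :=
  ∀ c : Fin 5 → ℕ, Adm c → minor5 h10 h11 h12 h20 h21 h22 c ≠ 0

theorem pcm_eq_ent {F : Type*} [Field F] (h10 h11 h12 h20 h21 h22 : F)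
    (p : Fin ((4 + 1) * (2 - 1))) (q : Fin ((2 + 4 + 1) * 2)) :
    pcm 2 1 2 (by norm_num) (by norm_num) (Htriple h10 h11 h12 h20 h21 h22) 4 p q
      = ent h10 h11 h12 h20 h21 h22 p q := by
  change Fin 5 at p
  change Fin 14 at q
  fin_cases p <;> fin_cases q <;> rfl

theorem completeJMDP_iff {F : Type*} [Field F] (h10 h11 h12 h20 h21 h22 : F) :
    CompleteJMDP 2 1 2 (by norm_num) (by norm_num) (Htriple h10 h11 h12 h20 h21 h22) 4 ↔
      AllMinors h10 h11 h12 h20 h21 h22 := by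
  have key : ∀ js : Fin ((4 + 1) * (2 - 1)) → Fin ((2 + 4 + 1) * 2),
      ((pcm 2 1 2 (by norm_num) (by norm_num) (Htriple h10 h11 h12 h20 h21 h22) 4).submatrix
        id js).det = minor5 h10 h11 h12 h20 h21 h22 (fun i => (js i : ℕ)) := by
    intro js
    unfold minor5 minorAt
    congr 1
    ext i j
    simp only [Matrix.submatrix_apply, pcm_eq_ent, Matrix.of_apply, zero_add]
    rfl
  constructor
  · intro H c hc
    have hlt : ∀ s, c s < (2 + 4 + 1) * 2 := fun s => by
      have := (hc.2 s).2
      omega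
    have := H (fun s => ⟨c s, hlt s⟩) ⟨fun a b hab => hc.1 hab, ?_⟩
    · rwa [key] at this
    · intro s hs1 hs4 h1 h2
      have a := (hc.2 ⟨(2 - 1) * s, h1⟩).1
      have b := (hc.2 ⟨(2 - 1) * s - 1, h2⟩).2
      dsimp only at a b ⊢
      constructor <;> omega
  · intro H js hjs
    rw [key]
    refine H _ ⟨fun a b hab => hjs.1 hab, fun s => ?_⟩
    obtain ⟨s, hs⟩ := s
    constructor
    · rcases Nat.eq_zero_or_pos s with rfl | hpos
      · simp
      · have h := (hjs.2 s hpos (by omega) (by omega) (by omega)).1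
        simp only [Nat.add_one_sub_one, one_mul] at h
        dsimp only
        omega
    · rcases Nat.lt_or_ge s 4 with h4 | h4
      · have h := (hjs.2 (s + 1) (by omega) (by omega) (by omega) (by omega)).2
        simp only [Nat.add_one_sub_one, one_mul] at h
        dsimp only
        omega
      · have h := (js ⟨s, hs⟩).2
        dsimp only
        omega

theorem allMinors_scale {F : Type*} [Field F] {u v t : F} (hu : u ≠ 0) (hv : v ≠ 0) (ht : t ≠ 0)
    (h10 h11 h12 h20 h21 h22 : F) :
    AllMinors (u * t ^ 2 * h10) (u * t * h11) (u * h12) (v * t ^ 2 * h20) (v * t * h21) (v * h22) ↔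
      AllMinors h10 h11 h12 h20 h21 h22 := by
  refine forall_congr' fun c => imp_congr_right fun _ => not_congr ?_
  have hdet : (∏ p : Fin 5, t ^ (p : ℕ)) * minor5 (u * t ^ 2 * h10) (u * t * h11) (u * h12)
        (v * t ^ 2 * h20) (v * t * h21) (v * h22) c
      = (∏ q : Fin 5, (if c q % 2 = 0 then u else v) * t ^ (c q / 2))
        * minor5 h10 h11 h12 h20 h21 h22 c := by
    unfold minor5 minorAt
    rw [← Matrix.det_mul_column, ← Matrix.det_mul_row]
    congr 1
    ext p q
    simpa using ent_scale u v t h10 h11 h12 h20 h21 h22 p (c q)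
  have hL : (∏ p : Fin 5, t ^ (p : ℕ)) ≠ 0 :=
    Finset.prod_ne_zero_iff.2 fun p _ => pow_ne_zero _ ht
  have hR : (∏ q : Fin 5, (if c q % 2 = 0 then u else v) * t ^ (c q / 2)) ≠ 0 :=
    Finset.prod_ne_zero_iff.2 fun q _ => mul_ne_zero (by split_ifs <;> assumption)
      (pow_ne_zero _ ht)
  constructor
  · intro h
    rw [h, mul_zero] at hdet
    exact (mul_eq_zero.1 hdet.symm).resolve_left hR
  · intro h
    rw [h, mul_zero] at hdet
    exact (mul_eq_zero.1 hdet).resolve_left hL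

/-! ### The finite search -/

/-- Minors over `ZMod 13` are computed from natural number representatives of the
coefficients. -/
theorem minor5_cast (h10 h11 h12 h20 h21 h22 : ℕ) (c : Fin 5 → ℕ) :
    minor5 (h10 : ZMod 13) h11 h12 h20 h21 h22 c = 0 ↔
      laplace (ent h10 h11 h12 h20 h21 h22) 5 0 (List.ofFn c) % 13 = 0 := by
  have h : minor5 (h10 : ZMod 13) h11 h12 h20 h21 h22 c
      = (laplace (ent h10 h11 h12 h20 h21 h22) 5 0 (List.ofFn c) : ZMod 13) := by
    rw [laplace_ofFn, minor5]
    congr 1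
    funext p q
    unfold ent
    split <;> simp
  rw [h, ZMod.natCast_eq_zero_iff, Nat.dvd_iff_mod_eq_zero]

/-- The codes `(z² + z ± 2, z² - z ± 2)` pass all admissible minors modulo `13`. -/
theorem backward_check : ∀ a ∈ [2, 11],
    ∀ c0 ∈ List.range' 0 6, ∀ c1 ∈ List.range' 2 6, c0 < c1 → ∀ c2 ∈ List.range' 4 6, c1 < c2 →
      ∀ c3 ∈ List.range' 6 6, c2 < c3 → ∀ c4 ∈ List.range' 8 6, c3 < c4 →
        laplace (ent a 1 1 a 12 1) 5 0 [c0, c1, c2, c3, c4] % 13 ≠ 0 := by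
  decide +kernel

/-- Column choices meeting only the columns of `h_1`; their minors restrict `h10`. -/
def testsEven : List (List ℕ) :=
  [[0, 2, 6, 8, 12], [0, 2, 6, 8, 10], [2, 4, 6, 8, 10]]

/-- Column choices meeting only the columns of `h_2`; their minors restrict `(h20, h21)`. -/
def testsOdd : List (List ℕ) :=
  [[1, 5, 7, 9, 13], [3, 5, 7, 9, 11]]

/-- Column choices whose minors exclude all remaining normalised coefficient triples but two. -/
def testsMixed : List (List ℕ) :=
  [[2, 5, 8, 10, 11], [2, 3, 8, 9, 11], [3, 4, 8, 9, 10], [2, 5, 6, 10, 12], [0, 6, 7, 8, 11],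
   [2, 4, 7, 10, 12], [3, 5, 6, 10, 12], [0, 6, 7, 8, 10], [3, 4, 6, 10, 12], [2, 5, 7, 10, 12],
   [0, 6, 7, 9, 11], [0, 4, 6, 9, 10], [0, 5, 7, 8, 11], [0, 2, 6, 8, 9], [0, 2, 7, 8, 9],
   [0, 4, 7, 9, 10], [0, 4, 6, 9, 11], [0, 4, 6, 8, 9], [2, 4, 6, 8, 11], [0, 4, 6, 8, 11],
   [3, 5, 7, 9, 10], [0, 4, 7, 8, 11], [0, 5, 6, 9, 10], [0, 5, 7, 9, 10], [0, 4, 7, 8, 9],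
   [3, 4, 6, 9, 11], [3, 5, 7, 8, 11], [0, 5, 6, 8, 11], [2, 4, 6, 9, 10], [2, 5, 7, 9, 10],
   [3, 4, 6, 8, 11]]

/-- All column choices used to exclude normalised coefficient triples. -/
def tests : List (List ℕ) := testsEven ++ testsOdd ++ testsMixed

/-- Normalised values of `h10` (equivalently of `h20 / h21²`) for which the minors in a single
column pass. -/
def survivors : List ℕ := [2, 3, 4, 5, 6, 8, 10, 11, 12]

theorem laplace_even (a b c : ℕ) : ∀ l ∈ testsEven,
    laplace (ent a 1 1 b c 1) 5 0 l = laplace (ent a 1 1 0 0 0) 5 0 l := by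
  intro l hl
  fin_cases hl <;> rfl

theorem laplace_odd (a b c : ℕ) : ∀ l ∈ testsOdd,
    laplace (ent a 1 1 b c 1) 5 0 l = laplace (ent 0 0 0 b c 1) 5 0 l := by
  intro l hl
  fin_cases hl <;> rfl

theorem even_check : ∀ a ∈ List.range 13,
    (∀ l ∈ testsEven, laplace (ent a 1 1 0 0 0) 5 0 l % 13 ≠ 0) → a ∈ survivors := by
  decide +kernel

theorem odd_check : ∀ b ∈ List.range 13, ∀ c ∈ List.range 13,
    (∀ l ∈ testsOdd, laplace (ent 0 0 0 b c 1) 5 0 l % 13 ≠ 0) →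
      ∃ x ∈ survivors, b = x * c ^ 2 % 13 := by
  decide +kernel

theorem mixed_check : ∀ a ∈ survivors, ∀ c ∈ List.range 13, ∀ x ∈ survivors,
    (∀ l ∈ testsMixed, laplace (ent a 1 1 (x * c ^ 2 % 13) c 1) 5 0 l % 13 ≠ 0) →
      c = 12 ∧ a = x ∧ (a = 2 ∨ a = 11) := by
  decide +kernel

theorem adm_of_mem_tests : ∀ l ∈ tests, ∃ c : Fin 5 → ℕ, Adm c ∧ List.ofFn c = l := by
  have h : ∀ l ∈ tests, l.length = 5 ∧
      (∀ s : Fin 4, l.getD s 0 < l.getD (s + 1) 0) ∧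
      ∀ s : Fin 5, 2 * (s : ℕ) ≤ l.getD s 0 ∧ l.getD s 0 < 2 * s + 6 := by
    decide +kernel
  intro l hl
  obtain ⟨hlen, hmono, hb⟩ := h l hl
  refine ⟨fun s => l.getD s 0, ⟨Fin.strictMono_iff_lt_succ.2 fun s => ?_, hb⟩, ?_⟩
  · simpa using hmono s
  · apply List.ext_getElem
    · simp [hlen]
    · intro i h1 h2
      rw [List.getElem_ofFn]
      exact List.getD_eq_getElem l 0 h2

/-- Among the codes normalised by `h12 = h22 = h11 = 1`, only two can pass all admissible
minors. -/
theorem normalised_of_allMinors (a b c : ZMod 13) (H : AllMinors a 1 1 b c 1) :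
    c = -1 ∧ a = b ∧ (a = 2 ∨ a = -2) := by
  have ht : ∀ l ∈ tests, laplace (ent a.val 1 1 b.val c.val 1) 5 0 l % 13 ≠ 0 := by
    intro l hl h0
    obtain ⟨s, hs, rfl⟩ := adm_of_mem_tests l hl
    rw [← minor5_cast] at h0
    simp only [ZMod.natCast_zmod_val, Nat.cast_one] at h0
    exact H s hs h0
  simp only [tests, List.mem_append] at ht
  have hc := List.mem_range.2 c.val_lt
  have ha := even_check a.val (List.mem_range.2 a.val_lt) fun l hl =>
    laplace_even a.val b.val c.val l hl ▸ ht l (Or.inl (Or.inl hl))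
  obtain ⟨x, hx, hbx⟩ := odd_check b.val (List.mem_range.2 b.val_lt) c.val hc fun l hl =>
    laplace_odd a.val b.val c.val l hl ▸ ht l (Or.inl (Or.inr hl))
  obtain ⟨h1, h2, h3⟩ := mixed_check a.val ha c.val hc x hx fun l hl =>
    hbx ▸ ht l (Or.inr hl)
  have hab : b.val = a.val := by
    rw [hbx, h1, ← h2]
    rcases h3 with h3 | h3 <;> norm_num [h3]
  refine ⟨ZMod.val_injective 13 (h1.trans rfl), ZMod.val_injective 13 hab.symm, h3.imp ?_ ?_⟩
  · exact fun h => ZMod.val_injective 13 (h.trans rfl)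
  · exact fun h => ZMod.val_injective 13 (h.trans rfl)

theorem allMinors_normalised (a : ZMod 13) (ha : a = 2 ∨ a = -2) : AllMinors a 1 1 a (-1) 1 := by
  intro c hc h0
  obtain ⟨z, hz, rfl⟩ : ∃ z ∈ [2, 11], ((z : ℕ) : ZMod 13) = a := by
    rcases ha with rfl | rfl
    · exact ⟨2, by simp, by decide⟩
    · exact ⟨11, by simp, by decide⟩
  have h1 := minor5_cast z 1 1 z 12 1 c
  rw [Nat.cast_one, show ((12 : ℕ) : ZMod 13) = -1 by decide] at h1
  rw [h1] at h0
  have hm : ∀ s : Fin 5, c s ∈ List.range' (2 * (s : ℕ)) 6 := fun s => by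
    have := hc.2 s
    rw [List.mem_range'_1]
    exact this
  have hlt : ∀ s s' : Fin 5, s < s' → c s < c s' := fun s s' h => hc.1 h
  exact backward_check z hz (c 0) (hm 0) (c 1) (hm 1) (hlt 0 1 (by decide)) (c 2) (hm 2)
    (hlt 1 2 (by decide)) (c 3) (hm 3) (hlt 2 3 (by decide)) (c 4) (hm 4) (hlt 3 4 (by decide)) h0

/-! ### Classification of the codes -/

/-- The column choices used give the triangular minors `h12⁵`, `h22⁵` and `h12⁴ h11`. -/
theorem leading_ne_zero {F : Type*} [Field F] {h10 h11 h12 h20 h21 h22 : F}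
    (H : AllMinors h10 h11 h12 h20 h21 h22) : h12 ≠ 0 ∧ h22 ≠ 0 ∧ h11 ≠ 0 := by
  have hadm : ∀ c ∈ [![0, 2, 4, 6, 8], ![1, 3, 5, 7, 9], ![0, 2, 4, 6, 10]], Adm c := by
    unfold Adm StrictMono
    decide +kernel
  refine ⟨?_, ?_, ?_⟩ <;> rintro rfl
  · exact H _ (hadm ![0, 2, 4, 6, 8] (by simp))
      (Matrix.det_eq_zero_of_column_eq_zero 0 fun i => by fin_cases i <;> simp [ent])
  · exact H _ (hadm ![1, 3, 5, 7, 9] (by simp))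
      (Matrix.det_eq_zero_of_column_eq_zero 0 fun i => by fin_cases i <;> simp [ent])
  · exact H _ (hadm ![0, 2, 4, 6, 10] (by simp))
      (Matrix.det_eq_zero_of_row_eq_zero 4 fun i => by fin_cases i <;> simp [ent])

theorem isCoprime_family {F : Type*} [Field F] {u v t a : F} (hu : u ≠ 0) (hv : v ≠ 0)
    (ht : t ≠ 0) (ha : a ≠ 0) (h2 : (2 : F) ≠ 0) :
    IsCoprime (hpoly (u * t ^ 2 * a) (u * t) u) (hpoly (v * t ^ 2 * a) (-(v * t)) v) := by
  -- With `p = h_1 / u` and `q = h_2 / v`, one has `p - q = 2tz` and `p + q = 2z² + 2t²a`.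
  have hk : (2 * t ^ 2 * a) ≠ 0 := by positivity
  refine ⟨C ((2 * t ^ 2 * a)⁻¹ * u⁻¹) * (1 - C t⁻¹ * X),
    C ((2 * t ^ 2 * a)⁻¹ * v⁻¹) * (1 + C t⁻¹ * X), ?_⟩
  have e1 : (C (u⁻¹) * C u : F[X]) = 1 := by rw [← C_mul, inv_mul_cancel₀ hu, C_1]
  have e2 : (C (v⁻¹) * C v : F[X]) = 1 := by rw [← C_mul, inv_mul_cancel₀ hv, C_1]
  have e3 : (C (t⁻¹) * C t : F[X]) = 1 := by rw [← C_mul, inv_mul_cancel₀ ht, C_1]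
  have e4 : (C ((2 * t ^ 2 * a)⁻¹) * (2 * C t ^ 2 * C a) : F[X]) = 1 := by
    rw [← C_ofNat, ← C_pow, ← C_mul, ← C_mul, ← C_mul, inv_mul_cancel₀ hk, C_1]
  simp only [hpoly, C_mul, C_pow, C_neg] at *
  generalize C ((2 * t ^ 2 * a)⁻¹) = k at *
  generalize C u⁻¹ = u' at *
  generalize C v⁻¹ = v' at *
  generalize C t⁻¹ = t' at *
  linear_combination (k * (1 - t' * X) * (C t ^ 2 * C a + C t * X + X ^ 2)) * e1
    + (k * (1 + t' * X) * (C t ^ 2 * C a - C t * X + X ^ 2)) * e2 + e4 - 2 * k * X ^ 2 * e3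

/-- The classification with `t` in place of `2^{i₁}` and `±2` in place of `2^{1 + 6j}`. -/
theorem is212_iff_scaled (h10 h11 h12 h20 h21 h22 : ZMod 13) :
    Is212 4 h10 h11 h12 h20 h21 h22 ↔
      ∃ t a : ZMod 13, h12 ≠ 0 ∧ h22 ≠ 0 ∧ t ≠ 0 ∧ (a = 2 ∨ a = -2) ∧
        h11 = h12 * t ∧ h21 = -(h22 * t) ∧ h10 = h12 * t ^ 2 * a ∧ h20 = h22 * t ^ 2 * a := by
  unfold Is212
  rw [completeJMDP_iff]
  constructor
  · rintro ⟨-, H⟩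
    obtain ⟨hu, hv, hw⟩ := leading_ne_zero H
    have ht : h11 / h12 ≠ 0 := div_ne_zero hw hu
    have e1 : h11 = h12 * (h11 / h12) := by field_simp
    -- `t = h11 / h12` is the substitution `z ↦ z / t` that makes the middle coefficient `1`.
    generalize h11 / h12 = t at ht e1
    have hn := (allMinors_scale hu hv ht (h10 / (h12 * t ^ 2)) 1 1 (h20 / (h22 * t ^ 2))
      (h21 / (h22 * t)) 1).1 (by
        convert H using 1 <;> first | (field_simp; done) | (rw [e1]; ring))
    obtain ⟨hc, hab, ha⟩ := normalised_of_allMinors _ _ _ hn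
    refine ⟨t, _, hu, hv, ht, ha, e1, ?_, ?_, ?_⟩
    · rw [div_eq_iff (mul_ne_zero hv ht)] at hc
      rw [hc]
      ring
    · field_simp
    · rw [hab]
      field_simp
  · rintro ⟨t, a, hu, hv, ht, ha, rfl, rfl, rfl, rfl⟩
    have ha0 : a ≠ 0 := by rcases ha with rfl | rfl <;> decide
    refine ⟨isCoprime_family hu hv ht ha0 (by decide), ?_⟩
    have := (allMinors_scale hu hv ht a 1 1 a (-1) 1).2 (allMinors_normalised a ha)
    simpa using this

theorem is212_iff_powers (h10 h11 h12 h20 h21 h22 : ZMod 13) :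
    Is212 4 h10 h11 h12 h20 h21 h22 ↔
      ∃ (β γ : ZMod 13) (i1 e : ℕ), β ≠ 0 ∧ γ ≠ 0 ∧ i1 ≤ 11 ∧ e ≤ 1 ∧
        h12 = β ∧ h22 = γ ∧
        h11 = β * 2 ^ i1 ∧ h21 = γ * 2 ^ ((i1 + 6) % 12) ∧
        h10 = β * 2 ^ ((2 * i1 + 1 + 6 * e) % 12) ∧
        h20 = γ * 2 ^ ((2 * i1 + 1 + 6 * e) % 12) := by
  have hlog : ∀ t : ZMod 13, t ≠ 0 → ∃ i < 12, t = 2 ^ i := by decide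
  have hneg : ∀ i < 12, (2 : ZMod 13) ^ ((i + 6) % 12) = -2 ^ i := by decide
  have hsq : ∀ i < 12, ∀ e < 2, (2 : ZMod 13) ^ ((2 * i + 1 + 6 * e) % 12)
      = (2 ^ i) ^ 2 * (if e = 0 then 2 else -2) := by decide
  rw [is212_iff_scaled]
  constructor
  · rintro ⟨t, a, hu, hv, ht, ha, rfl, rfl, rfl, rfl⟩
    obtain ⟨i, hi, rfl⟩ := hlog t ht
    obtain ⟨e, he, rfl⟩ : ∃ e < 2, a = if e = 0 then 2 else -2 := by
      rcases ha with rfl | rfl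
      · exact ⟨0, by simp⟩
      · exact ⟨1, by simp⟩
    refine ⟨_, _, i, e, hu, hv, by omega, by omega, rfl, rfl, rfl, ?_, ?_, ?_⟩
    · rw [hneg i hi, mul_neg]
    · rw [hsq i hi e he, mul_assoc]
    · rw [hsq i hi e he, mul_assoc]
  · rintro ⟨β, γ, i, e, hu, hv, hi, he, rfl, rfl, rfl, rfl, rfl, rfl⟩
    refine ⟨2 ^ i, if e = 0 then 2 else -2, hu, hv, pow_ne_zero _ (by decide),
      by split_ifs <;> simp, rfl, ?_, ?_, ?_⟩
    · rw [hneg i (by omega), mul_neg]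
    · rw [hsq i (by omega) e (by omega), mul_assoc]
    · rw [hsq i (by omega) e (by omega), mul_assoc]

/-! ### Counting -/

/-- The six entries `(h10, h11, h12, h20, h21, h22)` of the code with parameters
`((β, γ), (i₁, e))`. -/
def family (x : (ZMod 13 × ZMod 13) × (ℕ × ℕ)) :
    ZMod 13 × ZMod 13 × ZMod 13 × ZMod 13 × ZMod 13 × ZMod 13 :=
  (x.1.1 * 2 ^ ((2 * x.2.1 + 1 + 6 * x.2.2) % 12), x.1.1 * 2 ^ x.2.1, x.1.1,
    x.1.2 * 2 ^ ((2 * x.2.1 + 1 + 6 * x.2.2) % 12), x.1.2 * 2 ^ ((x.2.1 + 6) % 12), x.1.2)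

/-- The parameters `((β, γ), (i₁, e))` with `β, γ ≠ 0`, `i₁ < 12`, `e < 2`. -/
def params : Finset ((ZMod 13 × ZMod 13) × (ℕ × ℕ)) :=
  (Finset.univ.erase 0 ×ˢ Finset.univ.erase 0) ×ˢ (Finset.range 12 ×ˢ Finset.range 2)

theorem mem_params (x : (ZMod 13 × ZMod 13) × (ℕ × ℕ)) :
    x ∈ params ↔ (x.1.1 ≠ 0 ∧ x.1.2 ≠ 0) ∧ x.2.1 < 12 ∧ x.2.2 < 2 := by
  simp [params]

theorem card_params : params.card = 3456 := by
  simp only [params, Finset.card_product, Finset.card_range]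
  decide +kernel

-- Only membership and cardinality matter from here on; unfolding `params` is never useful.
attribute [irreducible] params

theorem family_injOn : Set.InjOn family (params : Set ((ZMod 13 × ZMod 13) × (ℕ × ℕ))) := by
  have hinj : ∀ i < 12, ∀ i' < 12, (2 : ZMod 13) ^ i = 2 ^ i' → i = i' := by
    decide +kernel
  have hinj' : ∀ i < 12, ∀ e < 2, ∀ e' < 2,
      (2 : ZMod 13) ^ ((2 * i + 1 + 6 * e) % 12) = 2 ^ ((2 * i + 1 + 6 * e') % 12) → e = e' := by
    decide +kernel
  rintro ⟨⟨β, γ⟩, i, e⟩ hx ⟨⟨β', γ'⟩, i', e'⟩ hx' h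
  rw [Finset.mem_coe, mem_params] at hx hx'
  obtain ⟨⟨hβ, hγ⟩, hi, he⟩ := hx
  obtain ⟨-, hi', he'⟩ := hx'
  simp only [family, Prod.mk.injEq] at h hβ hγ hi he hi' he'
  obtain ⟨h10, h11, rfl, -, -, rfl⟩ := h
  obtain rfl := hinj i hi i' hi' (mul_left_cancel₀ hβ h11)
  obtain rfl := hinj' i hi e he e' he' (mul_left_cancel₀ hβ h10)
  rfl

theorem mem_family_iff (x : ZMod 13 × ZMod 13 × ZMod 13 × ZMod 13 × ZMod 13 × ZMod 13) :
    (x.1 ≠ 0 ∧ x.2.1 ≠ 0 ∧ x.2.2.1 ≠ 0 ∧ x.2.2.2.1 ≠ 0 ∧ x.2.2.2.2.1 ≠ 0 ∧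
      x.2.2.2.2.2 ≠ 0 ∧
      Is212 4 x.1 x.2.1 x.2.2.1 x.2.2.2.1 x.2.2.2.2.1 x.2.2.2.2.2) ↔
      x ∈ params.image family := by
  obtain ⟨h10, h11, h12, h20, h21, h22⟩ := x
  rw [is212_iff_powers, Finset.mem_image]
  have h2 : (2 : ZMod 13) ≠ 0 := by decide
  constructor
  · rintro ⟨-, -, -, -, -, -, β, γ, i, e, hβ, hγ, hi, he, h⟩
    obtain ⟨e1, e2, e3, e4, e5, e6⟩ := h
    refine ⟨((β, γ), (i, e)), (mem_params _).2 ⟨⟨hβ, hγ⟩, ?_, ?_⟩, ?_⟩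
    · dsimp only
      omega
    · dsimp only
      omega
    · dsimp only at e1 e2 e3 e4 e5 e6
      simp only [family, e1, e2, e3, e4, e5, e6]
  · rintro ⟨⟨⟨β, γ⟩, i, e⟩, hx, h⟩
    rw [mem_params] at hx
    obtain ⟨⟨hβ, hγ⟩, hi, he⟩ := hx
    simp only [family, Prod.mk.injEq] at h hβ hγ hi he
    obtain ⟨rfl, rfl, rfl, rfl, rfl, rfl⟩ := h
    have hp : ∀ n, (2 : ZMod 13) ^ n ≠ 0 := fun n => pow_ne_zero n h2
    exact ⟨mul_ne_zero hβ (hp _), mul_ne_zero hβ (hp _), hβ, mul_ne_zero hγ (hp _),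
      mul_ne_zero hγ (hp _), hγ, β, γ, i, e, hβ, hγ, by omega, by omega, rfl, rfl, rfl, rfl, rfl,
      rfl⟩

theorem stmt18 :
    (∀ h10 h11 h12 h20 h21 h22 : ZMod 13,
      Is212 4 h10 h11 h12 h20 h21 h22 ↔
        ∃ (β γ : ZMod 13) (i1 e : ℕ), β ≠ 0 ∧ γ ≠ 0 ∧ i1 ≤ 11 ∧ e ≤ 1 ∧
          h12 = β ∧ h22 = γ ∧
          h11 = β * 2 ^ i1 ∧ h21 = γ * 2 ^ ((i1 + 6) % 12) ∧
          h10 = β * 2 ^ ((2 * i1 + 1 + 6 * e) % 12) ∧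
          h20 = γ * 2 ^ ((2 * i1 + 1 + 6 * e) % 12)) ∧
    Nat.card {x : ZMod 13 × ZMod 13 × ZMod 13 × ZMod 13 × ZMod 13 × ZMod 13 //
      x.1 ≠ 0 ∧ x.2.1 ≠ 0 ∧ x.2.2.1 ≠ 0 ∧ x.2.2.2.1 ≠ 0 ∧ x.2.2.2.2.1 ≠ 0 ∧
      x.2.2.2.2.2 ≠ 0 ∧
      Is212 4 x.1 x.2.1 x.2.2.1 x.2.2.2.1 x.2.2.2.2.1 x.2.2.2.2.2} = 3456 := by
  refine ⟨is212_iff_powers, ?_⟩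
  rw [Nat.card_congr (Equiv.subtypeEquivRight mem_family_iff)]
  rw [Nat.card_eq_fintype_card, Fintype.card_coe, Finset.card_image_of_injOn family_injOn,
    card_params]
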